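/- arXiv:1805.11319 — 2 statements merged into one kernel-verified Lean document; each statement's English description precedes it below -/
import Mathlib

section
/- Let k be a positive integer, let α, β ∈ ℝ with |α| < 1/2 and −1/2 ≤ β < 1/2, and let z ∈ ℂ with Re(z) > 0. Set H := ∫_ℝ exp(−πx²/(kz) − 2πx(iβ/(kz) + α)) / cosh(πx) dx (a convergent complex integral; in the paper's notation this is H(iβ/(kz)+α; i/(kz))). If β ≠ −1/2, then |H| ≤ |sec(πβ)| · k^{1/2} · (Re(1/z))^{−1/2} · exp( −(πβ²/k)·Re(1/z) + πkα²·(Re(1/z))^{−1} ). If β = −1/2, then |H| ≤ ( 1 + k^{1/2}·(Re(1/z))^{−1/2} ) · exp( −(π/(4k))·Re(1/z) ). -/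
open MeasureTheory
open MeasureTheory Filter Topology

theorem mib_shift (f : ℂ → ℂ) (b K : ℝ) (hK : 0 ≤ K) (M : ℝ → ℝ)
    (hd : ∀ w : ℂ, w.im ∈ Set.uIcc 0 b → DifferentiableAt ℂ f w)
    (hM : Tendsto M atTop (𝓝 0))
    (hb : ∀ x y : ℝ, y ∈ Set.uIcc 0 b → x ≠ 0 → ‖f (x + y * Complex.I)‖ ≤ M |x|)
    (hK2 : ∀ T : ℝ, 0 < T → ‖∫ x in (-T)..T, f (x + b * Complex.I)‖ ≤ K) :
    ‖∫ x : ℝ, f x‖ ≤ K := by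
  by_cases hi : Integrable (fun x : ℝ => f x)
  swap
  · rw [integral_undef hi]; simpa using hK
  have h1 : Tendsto (fun T : ℝ => ‖∫ x in (-T)..T, f x‖) atTop (𝓝 ‖∫ x : ℝ, f x‖) :=
    (intervalIntegral_tendsto_integral hi tendsto_neg_atTop_atBot tendsto_id).norm
  have h2 : Tendsto (fun T : ℝ => K + M T * |b| + M T * |b|) atTop (𝓝 (K + 0 * |b| + 0 * |b|)) :=
    ((tendsto_const_nhds.add (hM.mul_const _)).add (hM.mul_const _))
  have h3 : ‖∫ x : ℝ, f x‖ ≤ K + 0 * |b| + 0 * |b| := by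
    refine le_of_tendsto_of_tendsto h1 h2 ?_
    filter_upwards [eventually_gt_atTop 0] with T hT
    have hr := Complex.integral_boundary_rect_eq_zero_of_differentiableOn f (-(T : ℂ))
      (T + b * Complex.I) (by
        intro w hw
        rw [Complex.mem_reProdIm] at hw
        exact (hd w (by simpa using hw.2)).differentiableWithinAt)
    simp at hr
    have e1 : ‖∫ y in (0 : ℝ)..b, f (T + y * Complex.I)‖ ≤ M T * |b| := by
      have := intervalIntegral.norm_integral_le_of_norm_le_const (a := 0) (b := b) (C := M T)
        (f := fun y : ℝ => f (T + y * Complex.I)) (fun y hy => by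
          have := hb T y (Set.uIoc_subset_uIcc hy) hT.ne'
          rwa [abs_of_pos hT] at this)
      simpa using this
    have e2 : ‖∫ y in (0 : ℝ)..b, f (-T + y * Complex.I)‖ ≤ M T * |b| := by
      have := intervalIntegral.norm_integral_le_of_norm_le_const (a := 0) (b := b) (C := M T)
        (f := fun y : ℝ => f (-T + y * Complex.I)) (fun y hy => by
          have := hb (-T) y (Set.uIoc_subset_uIcc hy) (by linarith)
          rw [abs_neg, abs_of_pos hT] at this
          simpa using this)
      simpa using this
    have e3 := hK2 T hT
    have : ∫ x in (-T)..T, f x = (∫ x in (-T)..T, f (x + b * Complex.I))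
        + -(Complex.I * ∫ y in (0 : ℝ)..b, f (T + y * Complex.I))
        + Complex.I * ∫ y in (0 : ℝ)..b, f (-T + y * Complex.I) := by
      linear_combination hr
    rw [this]
    refine (norm_add₃_le).trans ?_
    simp only [norm_neg, norm_mul, Complex.norm_I, one_mul]
    gcongr
  simpa using h3

theorem mib_gauss (c d e : ℂ) (hc : 0 < c.re) (B : ℝ) :
    ∃ M : ℝ → ℝ, Tendsto M atTop (𝓝 0) ∧ ∀ x y : ℝ, |y| ≤ B →
      ‖Complex.exp (-c * (x + y * Complex.I) ^ 2 + d * (x + y * Complex.I) + e)‖ ≤ M |x| := by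
  refine ⟨fun T => Real.exp (-(T * (c.re * T - (2 * |c.im| * B + |d.re|)))
    + (c.re * B ^ 2 + |d.im| * B + e.re)), ?_, ?_⟩
  · apply Real.tendsto_exp_atBot.comp
    apply Tendsto.atBot_add _ tendsto_const_nhds
    apply tendsto_neg_atTop_atBot.comp
    apply tendsto_id.atTop_mul_atTop₀
    exact tendsto_atTop_add_const_right _ _ (tendsto_id.const_mul_atTop hc)
  · intro x y hy
    rw [Complex.norm_exp]
    apply Real.exp_le_exp.mpr
    have h1 : c.im * x * y ≤ |c.im| * |x| * B := by
      calc c.im * x * y ≤ |c.im * x * y| := le_abs_self _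
        _ = |c.im| * |x| * |y| := by rw [abs_mul, abs_mul]
        _ ≤ _ := by gcongr
    have h2 : d.re * x ≤ |d.re| * |x| := by rw [← abs_mul]; exact le_abs_self _
    have h3 : -(d.im * y) ≤ |d.im| * B := by
      calc -(d.im * y) ≤ |d.im * y| := neg_le_abs _
        _ = |d.im| * |y| := abs_mul _ _
        _ ≤ _ := by gcongr
    have h4 : c.re * y ^ 2 ≤ c.re * B ^ 2 := by
      rw [← sq_abs y]; gcongr
    have h5 : |x| * |x| = x * x := abs_mul_abs_self x
    have : (-c * (x + y * Complex.I) ^ 2 + d * (x + y * Complex.I) + e).re =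
        -(c.re * (x * x)) + c.re * y ^ 2 + 2 * (c.im * x * y) + d.re * x - d.im * y + e.re := by
      simp [pow_two]; ring
    rw [this, ← h5]
    nlinarith

theorem mib_sinh (x y : ℝ) :
    ‖Complex.sinh (x + y * Complex.I)‖ ^ 2 = Real.sinh x ^ 2 + Real.sin y ^ 2 := by
  rw [Complex.sq_norm, Complex.normSq_apply, Complex.sinh_add, Complex.cosh_mul_I,
    Complex.sinh_mul_I, ← Complex.ofReal_cosh, ← Complex.ofReal_sinh, ← Complex.ofReal_cos,
    ← Complex.ofReal_sin]
  have h1 := Real.cosh_sq x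
  have h2 := Real.sin_sq_add_cos_sq y
  generalize Real.cosh x = A at *
  generalize Real.sinh x = B at *
  generalize Real.cos y = C at *
  generalize Real.sin y = D at *
  simp
  linear_combination D ^ 2 * h1 + B ^ 2 * h2

theorem mib_cosh (x y : ℝ) :
    Real.cos y ≤ ‖Complex.cosh (x + y * Complex.I)‖ := by
  refine le_of_sq_le_sq ?_ (norm_nonneg _)
  rw [Complex.sq_norm, Complex.normSq_apply, Complex.cosh_add, Complex.cosh_mul_I,
    Complex.sinh_mul_I, ← Complex.ofReal_cosh, ← Complex.ofReal_sinh, ← Complex.ofReal_cos,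
    ← Complex.ofReal_sin]
  have h1 := Real.cosh_sq x
  generalize Real.cosh x = A at *
  generalize Real.sinh x = B at *
  generalize Real.cos y = C at *
  generalize Real.sin y = D at *
  simp
  have : A * C * (A * C) = C ^ 2 + (B * C) ^ 2 := by linear_combination C ^ 2 * h1
  nlinarith [sq_nonneg (B * C), sq_nonneg (B * D)]

theorem mib_real_gauss (a α : ℝ) (ha : 0 < a) :
    Integrable (fun x : ℝ => Real.exp (-(Real.pi * a) * x ^ 2 - 2 * Real.pi * α * x)) ∧
    ∫ x : ℝ, Real.exp (-(Real.pi * a) * x ^ 2 - 2 * Real.pi * α * x) =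
      (Real.sqrt a)⁻¹ * Real.exp (Real.pi * α ^ 2 / a) := by
  have h : (fun x : ℝ => Real.exp (-(Real.pi * a) * x ^ 2 - 2 * Real.pi * α * x)) =
      fun x : ℝ => Real.exp (-(Real.pi * a) * (x + α / a) ^ 2) * Real.exp (Real.pi * α ^ 2 / a) := by
    funext x
    rw [← Real.exp_add]
    congr 1
    field_simp
    ring
  have hp : 0 < Real.pi * a := by positivity
  rw [h]
  constructor
  · exact ((integrable_exp_neg_mul_sq hp).comp_add_right (α / a)).mul_const _
  · rw [integral_mul_const, integral_add_right_eq_self (fun x : ℝ => Real.exp (-(Real.pi * a) * x ^ 2)),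
      integral_gaussian]
    congr 1
    rw [← Real.sqrt_inv]
    congr 1
    field_simp

theorem mib_sech : Integrable (fun x : ℝ => 1 / Real.cosh (Real.pi * x)) ∧
    ∫ x : ℝ, 1 / Real.cosh (Real.pi * x) = 1 := by
  have hd : ∀ x : ℝ, HasDerivAt (fun x : ℝ => 2 / Real.pi * Real.arctan (Real.exp (Real.pi * x)))
      (1 / Real.cosh (Real.pi * x)) x := by
    intro x
    have := ((((hasDerivAt_id x).const_mul Real.pi).exp).arctan).const_mul (2 / Real.pi)
    refine HasDerivAt.congr_deriv this ?_
    rw [Real.cosh_eq, Real.exp_neg]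
    have := Real.exp_pos (Real.pi * x)
    have := Real.pi_pos
    simp only [id]
    field_simp
    ring
  have h1 : Tendsto (fun x : ℝ => 2 / Real.pi * Real.arctan (Real.exp (Real.pi * x))) atTop
      (𝓝 (2 / Real.pi * (Real.pi / 2))) := by
    apply Tendsto.const_mul
    exact (tendsto_nhds_of_tendsto_nhdsWithin Real.tendsto_arctan_atTop).comp
      (Real.tendsto_exp_atTop.comp (tendsto_id.const_mul_atTop Real.pi_pos))
  have h2 : Tendsto (fun x : ℝ => 2 / Real.pi * Real.arctan (Real.exp (Real.pi * x))) atBot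
      (𝓝 (2 / Real.pi * Real.arctan 0)) := by
    apply Tendsto.const_mul
    exact (Real.continuous_arctan.tendsto 0).comp
      (Real.tendsto_exp_atBot.comp (tendsto_id.const_mul_atBot Real.pi_pos))
  have hpos : ∀ x : ℝ, 0 ≤ 1 / Real.cosh (Real.pi * x) := fun x => by
    have := Real.cosh_pos (Real.pi * x); positivity
  have hint : Integrable (fun x : ℝ => 1 / Real.cosh (Real.pi * x)) := by
    refine integrable_inv_one_add_sq.mono' (Continuous.aestronglyMeasurable ?_) ?_
    · exact continuous_const.div (by fun_prop) (fun x => (Real.cosh_pos _).ne')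
    · refine ae_of_all _ fun x => ?_
      rw [Real.norm_of_nonneg (hpos x), one_div]
      have h : 1 + x ^ 2 ≤ Real.cosh (Real.pi * x) := by
        have e : Real.cosh (Real.pi * x) = 1 + 2 * Real.sinh (Real.pi * x / 2) ^ 2 := by
          have h1 := Real.cosh_two_mul (Real.pi * x / 2)
          have h2 := Real.cosh_sq (Real.pi * x / 2)
          rw [show 2 * (Real.pi * x / 2) = Real.pi * x by ring] at h1
          linarith
        have h3 : (Real.pi * x / 2) ^ 2 ≤ Real.sinh (Real.pi * x / 2) ^ 2 := by
          rw [sq_le_sq, Real.abs_sinh]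
          exact Real.self_le_sinh_iff.mpr (abs_nonneg _)
        rw [e]
        have h4 : 2 ≤ Real.pi ^ 2 := by nlinarith [Real.pi_gt_three]
        nlinarith [mul_le_mul_of_nonneg_right h4 (sq_nonneg x)]
      exact inv_anti₀ (by positivity) h
  refine ⟨hint, ?_⟩
  rw [integral_of_hasDerivAt_of_tendsto hd hint h2 h1]
  simp

theorem mib_case1 (c : ℂ) (hc : 0 < c.re) (α β : ℝ) (hβ₁ : -(1 / 2) < β) (hβ₂ : β < 1 / 2) :
    ‖∫ x : ℝ, Complex.exp (-(Real.pi * c) * (x : ℂ) ^ 2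
        + (-2 * Real.pi * (Complex.I * β * c + α)) * (x : ℂ) + 0) /
          Complex.cosh (Real.pi * (x : ℂ))‖ ≤
      1 / Real.cos (Real.pi * β) * ((Real.sqrt c.re)⁻¹ * Real.exp (Real.pi * α ^ 2 / c.re)) *
        Real.exp (-(Real.pi * β ^ 2 * c.re)) := by
  have hpi := Real.pi_pos
  have hcp : 0 < ((Real.pi : ℂ) * c).re := by simpa using mul_pos hpi hc
  have hcos : 0 < Real.cos (Real.pi * β) := by
    apply Real.cos_pos_of_mem_Ioo
    constructor <;> nlinarith
  have hcosy : ∀ y : ℝ, |y| ≤ |β| → Real.cos (Real.pi * β) ≤ Real.cos (Real.pi * y) := by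
    intro y hy
    rw [← Real.cos_abs (Real.pi * β), ← Real.cos_abs (Real.pi * y)]
    have hb : |β| < 1 / 2 := abs_lt.mpr ⟨hβ₁, hβ₂⟩
    apply Real.cos_le_cos_of_nonneg_of_le_pi (abs_nonneg _)
    · rw [abs_mul, abs_of_pos hpi]; nlinarith
    · rw [abs_mul, abs_mul]; gcongr
  have hcosh : ∀ x y : ℝ, |y| ≤ |β| →
      Real.cos (Real.pi * β) ≤ ‖Complex.cosh (Real.pi * ((x : ℂ) + y * Complex.I))‖ := by
    intro x y hy
    have := mib_cosh (Real.pi * x) (Real.pi * y)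
    refine (hcosy y hy).trans (this.trans_eq ?_)
    congr 2
    push_cast
    ring
  have hyb : ∀ y : ℝ, y ∈ Set.uIcc 0 (-β) → |y| ≤ |β| := by
    intro y hy
    have := Set.abs_sub_left_of_mem_uIcc hy
    simpa using this
  obtain ⟨M, hM, hMb⟩ := mib_gauss (Real.pi * c) (-2 * Real.pi * (Complex.I * β * c + α)) 0 hcp |β|
  refine mib_shift (fun w : ℂ => Complex.exp (-(Real.pi * c) * w ^ 2
        + (-2 * Real.pi * (Complex.I * β * c + α)) * w + 0) /
          Complex.cosh (Real.pi * w)) (-β) _ (by positivity)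
          (fun T => M T / Real.cos (Real.pi * β)) ?_ ?_ ?_ ?_
  · intro w hw
    apply DifferentiableAt.div
    · fun_prop
    · fun_prop
    · have := hcosh w.re w.im (hyb _ hw)
      rw [Complex.re_add_im] at this
      exact norm_pos_iff.mp (hcos.trans_le this)
  · simpa using hM.div_const (Real.cos (Real.pi * β))
  · intro x y hy _
    simp only [norm_div]
    have h0 := hMb x y (hyb y hy)
    exact div_le_div₀ ((norm_nonneg _).trans h0) h0 hcos (hcosh x y (hyb y hy))
  · intro T hT
    obtain ⟨gi, ge⟩ := mib_real_gauss c.re α hc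
    have gi' := (gi.const_mul (1 / Real.cos (Real.pi * β))).mul_const
      (Real.exp (-(Real.pi * β ^ 2 * c.re)))
    rw [← ge, ← integral_const_mul, ← integral_mul_const]
    calc _ ≤ ∫ x in (-T)..T, 1 / Real.cos (Real.pi * β) *
          Real.exp (-(Real.pi * c.re) * x ^ 2 - 2 * Real.pi * α * x) *
          Real.exp (-(Real.pi * β ^ 2 * c.re)) := by
          apply intervalIntegral.norm_integral_le_of_norm_le (by linarith) _
            gi'.intervalIntegrable
          refine ae_of_all _ fun x _ => ?_
          rw [norm_div, Complex.norm_exp, mul_assoc (1 / _), ← Real.exp_add, div_mul_eq_mul_div, one_mul]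
          refine div_le_div₀ (Real.exp_nonneg _) ?_ hcos (hcosh x (-β) (by simp))
          apply le_of_eq
          congr 1
          simp [pow_two]
          ring
      _ ≤ _ := by
          rw [intervalIntegral.integral_of_le (by linarith)]
          apply setIntegral_le_integral gi'
          exact ae_of_all _ fun x => by simp only [Pi.zero_apply]; positivity

theorem mib_case2 (c : ℂ) (hc : 0 < c.re) (α : ℝ) (hα : |α| < 1 / 2) :
    ‖∫ x : ℝ, Complex.exp (-(Real.pi * c) * (x : ℂ) ^ 2
        + (-2 * Real.pi * (Complex.I * (-(1 / 2)) * c + α)) * (x : ℂ) + 0) /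
          Complex.cosh (Real.pi * (x : ℂ))‖ ≤
      (1 + (Real.sqrt c.re)⁻¹) * Real.exp (-(Real.pi / 4 * c.re)) := by
  have hpi := Real.pi_pos
  have hpiC : (Real.pi : ℂ) ≠ 0 := by exact_mod_cast hpi.ne'
  have hcp : 0 < ((Real.pi : ℂ) * c).re := by simpa using mul_pos hpi hc
  set N : ℂ → ℂ := fun w => Complex.exp (-(Real.pi * c) * w ^ 2 + (-2 * Real.pi * α) * w + 0) - 1
    with hN
  set S : ℂ → ℂ := fun w => Complex.sinh (Real.pi * w) with hS
  have hN0 : N 0 = 0 := by simp [hN]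
  have hS0 : S 0 = 0 := by simp [hS]
  have hNd : Differentiable ℂ N := by rw [hN]; fun_prop
  have hSd : Differentiable ℂ S := by rw [hS]; fun_prop
  have hS' : deriv S 0 = Real.pi := by
    have : HasDerivAt S (Complex.cosh (Real.pi * 0) * (Real.pi * 1)) 0 :=
      ((hasDerivAt_id (0 : ℂ)).const_mul (Real.pi : ℂ)).csinh
    rw [this.deriv]; simp
  set g : ℂ → ℂ := fun w => dslope N 0 w / dslope S 0 w with hg
  have hgne : ∀ w : ℂ, w ≠ 0 → g w = N w / S w := by
    intro w hw
    simp only [hg, dslope_of_ne _ hw, slope_def_field, hN0, hS0, sub_zero]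
    rw [div_div_div_cancel_right₀ hw]
  have hSn : ∀ x y : ℝ, ‖S (x + y * Complex.I)‖ ^ 2 =
      Real.sinh (Real.pi * x) ^ 2 + Real.sin (Real.pi * y) ^ 2 := by
    intro x y
    rw [← mib_sinh]
    simp only [hS]
    congr 3
    push_cast
    ring
  have hSne : ∀ w : ℂ, w ≠ 0 → |w.im| ≤ 1 / 2 → S w ≠ 0 := by
    intro w hw hw2 h
    have h1 := hSn w.re w.im
    rw [Complex.re_add_im, h] at h1
    have h2 : Real.sinh (Real.pi * w.re) = 0 := by
      have : Real.sinh (Real.pi * w.re) ^ 2 = 0 := by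
        simp at h1
        nlinarith [sq_nonneg (Real.sinh (Real.pi * w.re)), sq_nonneg (Real.sin (Real.pi * w.im))]
      simpa using this
    have h3 : Real.sin (Real.pi * w.im) = 0 := by
      rw [h2] at h1
      simpa using h1.symm
    rw [Real.sinh_eq_zero] at h2
    rw [abs_le] at hw2
    rw [Real.sin_eq_zero_iff_of_lt_of_lt (by nlinarith) (by nlinarith)] at h3
    apply hw
    apply Complex.ext
    · simpa [hpi.ne'] using h2
    · simpa [hpi.ne'] using h3
  have hdS : ∀ w : ℂ, |w.im| ≤ 1 / 2 → dslope S 0 w ≠ 0 := by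
    intro w hw
    by_cases h : w = 0
    · rw [h, dslope_same, hS']; exact hpiC
    · rw [dslope_of_ne _ h, slope_def_field, hS0, sub_zero, sub_zero]
      exact div_ne_zero (hSne w h hw) h
  have hdd : ∀ F : ℂ → ℂ, Differentiable ℂ F → Differentiable ℂ (dslope F 0) := by
    intro F hF
    rw [← differentiableOn_univ] at hF ⊢
    exact (Complex.differentiableOn_dslope Filter.univ_mem).mpr hF
  have hgd : ∀ w : ℂ, |w.im| ≤ 1 / 2 → DifferentiableAt ℂ g w := fun w hw =>
    ((hdd N hNd) w).div ((hdd S hSd) w) (hdS w hw)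
  have hgc : Continuous (fun t : ℝ => g t) := by
    rw [continuous_iff_continuousAt]
    intro t
    exact ContinuousAt.comp (f := fun t : ℝ => (t : ℂ)) (g := g)
      (hgd t (by simp)).continuousAt Complex.continuous_ofReal.continuousAt
  -- bound of the shifted integral
  obtain ⟨M, hM, hMb⟩ := mib_gauss (Real.pi * c) (-2 * Real.pi * α) 0 hcp (1 / 2)
  have hK : ‖∫ x : ℝ, g ((x : ℂ) - Complex.I / 2)‖ ≤ (Real.sqrt c.re)⁻¹ := by
    have him : ∀ y : ℝ, y ∈ Set.uIcc 0 (1 / 2 : ℝ) → |y - 1 / 2| ≤ 1 / 2 := by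
      intro y hy
      rw [Set.uIcc_of_le (by norm_num)] at hy
      rw [abs_le]; constructor <;> linarith [hy.1, hy.2]
    refine mib_shift (fun w => g (w - Complex.I / 2)) (1 / 2) _ (by positivity)
      (fun T => (M T + 1) / Real.sinh (Real.pi * T)) ?_ ?_ ?_ ?_
    · intro w hw
      have h1 : DifferentiableAt ℂ g (w - Complex.I / 2) := hgd _ (by simpa using him _ hw)
      exact DifferentiableAt.comp (g := g) (f := fun w : ℂ => w - Complex.I / 2) w h1 (by fun_prop)
    · refine (hM.add_const 1).div_atTop ?_
      refine tendsto_atTop_mono' _ ?_ (tendsto_id.const_mul_atTop hpi)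
      filter_upwards [eventually_ge_atTop 0] with T hT
      exact Real.self_le_sinh_iff.mpr (by simp only [id]; positivity)
    · intro x y hy hx
      have e : (x : ℂ) + y * Complex.I - Complex.I / 2 = x + ((y - 1 / 2 : ℝ) : ℂ) * Complex.I := by
        push_cast; ring
      have hne : (x : ℂ) + ((y - 1 / 2 : ℝ) : ℂ) * Complex.I ≠ 0 := by
        intro h
        apply hx
        have := congrArg Complex.re h
        simpa using this
      rw [e, hgne _ hne, norm_div]
      have h0 := hMb x (y - 1 / 2) (him y hy)
      have h1 : ‖N (x + ((y - 1 / 2 : ℝ) : ℂ) * Complex.I)‖ ≤ M |x| + 1 := by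
        refine (norm_sub_le _ _).trans ?_
        rw [norm_one]
        gcongr
      have h2 : 0 < Real.sinh (Real.pi * |x|) := Real.sinh_pos_iff.mpr (by positivity)
      have h3 : Real.sinh (Real.pi * |x|) ≤ ‖S (x + ((y - 1 / 2 : ℝ) : ℂ) * Complex.I)‖ := by
        refine le_of_sq_le_sq ?_ (norm_nonneg _)
        rw [hSn, show Real.pi * |x| = |Real.pi * x| by rw [abs_mul, abs_of_pos hpi],
          ← Real.abs_sinh, sq_abs]
        nlinarith [sq_nonneg (Real.sin (Real.pi * (y - 1 / 2)))]
      exact div_le_div₀ ((norm_nonneg _).trans h1) h1 h2 h3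
    · intro T hT
      have e : ∀ x : ℝ, (x : ℂ) + ((1 / 2 : ℝ) : ℂ) * Complex.I - Complex.I / 2 = x := by
        intro x; push_cast; ring
      simp only [e]
      obtain ⟨gi, ge⟩ := mib_real_gauss c.re 0 hc
      simp only [mul_zero, zero_mul, sub_zero, ne_eq, OfNat.ofNat_ne_zero, not_false_eq_true,
        zero_pow, zero_div, Real.exp_zero, mul_one] at gi ge
      have hneg : ∫ t in (-T)..T, g (-(t : ℂ)) = ∫ t in (-T)..T, g t := by
        have := intervalIntegral.integral_comp_neg (a := -T) (b := T) (fun t : ℝ => g (t : ℂ))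
        simpa using this
      have hgc2 : Continuous (fun t : ℝ => g (-(t : ℂ))) := by
        have := hgc.comp continuous_neg
        simpa [Function.comp_def] using this
      have h2 : (∫ t in (-T)..T, (g t + g (-(t : ℂ)))) = 2 * ∫ t in (-T)..T, g t := by
        rw [intervalIntegral.integral_add (hgc.intervalIntegrable _ _)
          (hgc2.intervalIntegrable _ _), hneg]
        ring
      have h3 : ‖∫ t in (-T)..T, (g t + g (-(t : ℂ)))‖ ≤
          ∫ t in (-T)..T, 2 * Real.exp (-(Real.pi * c.re) * t ^ 2) := by
        apply intervalIntegral.norm_integral_le_of_norm_le (by linarith) _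
          (gi.const_mul 2).intervalIntegrable
        have h0 : ∀ᵐ t : ℝ, t ≠ 0 := by simp [ae_iff]
        filter_upwards [h0] with t ht _
        have htC : (t : ℂ) ≠ 0 := by exact_mod_cast ht
        have hSneg : S (-(t : ℂ)) = -S t := by simp [hS]
        rw [hgne _ htC, hgne _ (neg_ne_zero.mpr htC), hSneg, div_neg, ← sub_eq_add_neg,
          ← sub_div]
        have hNN : N t - N (-(t : ℂ)) = Complex.exp (-(Real.pi * c) * (t : ℂ) ^ 2) *
            (-2 * (Real.sinh (2 * Real.pi * α * t) : ℝ)) := by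
          simp only [hN]
          push_cast
          rw [Complex.sinh, show -(Real.pi * c) * (t : ℂ) ^ 2 + (-2 * Real.pi * α) * t + 0 =
            -(Real.pi * c) * (t : ℂ) ^ 2 + -(2 * Real.pi * α * t) by ring,
            show -(Real.pi * c) * (-(t : ℂ)) ^ 2 + (-2 * Real.pi * α) * (-t) + 0 =
            -(Real.pi * c) * (t : ℂ) ^ 2 + (2 * Real.pi * α * t) by ring, Complex.exp_add,
            Complex.exp_add]
          ring
        have hSt : S t = ((Real.sinh (Real.pi * t) : ℝ) : ℂ) := by
          simp [hS]
        rw [hNN, hSt, norm_div, norm_mul, norm_mul, Complex.norm_exp, Complex.norm_real,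
          Complex.norm_real, norm_neg, Real.norm_eq_abs, Real.norm_eq_abs, Real.abs_sinh,
          Real.abs_sinh]
        have hsp : 0 < Real.sinh |Real.pi * t| := Real.sinh_pos_iff.mpr (by positivity)
        have hle : Real.sinh |2 * Real.pi * α * t| ≤ Real.sinh |Real.pi * t| := by
          rw [Real.sinh_le_sinh, show 2 * Real.pi * α * t = (2 * α) * (Real.pi * t) by ring,
            abs_mul (2 * α)]
          have : |2 * α| ≤ 1 := by rw [abs_mul, abs_two]; linarith
          nlinarith [abs_nonneg (Real.pi * t)]
        have hre : (-(Real.pi * c) * (t : ℂ) ^ 2).re = -(Real.pi * c.re) * t ^ 2 := by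
          simp [pow_two]
        rw [hre, div_le_iff₀ hsp]
        have := Real.exp_pos (-(Real.pi * c.re) * t ^ 2)
        simp only [Complex.norm_ofNat]
        nlinarith [mul_le_mul_of_nonneg_left hle this.le]
      have h4 : ∫ t in (-T)..T, 2 * Real.exp (-(Real.pi * c.re) * t ^ 2) ≤
          2 * (Real.sqrt c.re)⁻¹ := by
        rw [← ge, ← integral_const_mul, intervalIntegral.integral_of_le (by linarith)]
        apply setIntegral_le_integral (gi.const_mul 2)
        exact ae_of_all _ fun x => by simp only [Pi.zero_apply]; positivity
      rw [h2, norm_mul, Complex.norm_ofNat] at h3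
      linarith
  -- the integrand
  obtain ⟨si, se⟩ := mib_sech
  have siC : Integrable (fun x : ℝ => ((1 / Real.cosh (Real.pi * x) : ℝ) : ℂ)) := si.ofReal
  have seC : ∫ x : ℝ, ((1 / Real.cosh (Real.pi * x) : ℝ) : ℂ) = 1 := by
    exact (integral_ofReal (𝕜 := ℂ) (f := fun x : ℝ => 1 / Real.cosh (Real.pi * x))).trans (by rw [se]; simp)
  set κ : ℂ := Complex.exp (-(Real.pi / 4 * c) - Real.pi * α * Complex.I) with hκ
  have hκ0 : κ ≠ 0 := Complex.exp_ne_zero _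
  have hcoshne : ∀ x : ℝ, Complex.cosh (Real.pi * (x : ℂ)) ≠ 0 := by
    intro x
    have := (Real.cosh_pos (Real.pi * x)).ne'
    exact_mod_cast this
  have hform : ∀ x : ℝ, Complex.exp (-(Real.pi * c) * (x : ℂ) ^ 2
        + (-2 * Real.pi * (Complex.I * (-(1 / 2)) * c + α)) * (x : ℂ) + 0) /
          Complex.cosh (Real.pi * (x : ℂ)) =
      κ * (-Complex.I * g ((x : ℂ) - Complex.I / 2) + ((1 / Real.cosh (Real.pi * x) : ℝ) : ℂ)) := by
    intro x
    have hne : (x : ℂ) - Complex.I / 2 ≠ 0 := by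
      intro h
      have := congrArg Complex.im h
      norm_num at this
    have hSw : S ((x : ℂ) - Complex.I / 2) = -Complex.I * Complex.cosh (Real.pi * x) := by
      simp only [hS]
      rw [show (Real.pi : ℂ) * (x - Complex.I / 2) = Real.pi * x - (Real.pi / 2 : ℂ) * Complex.I by
        ring, Complex.sinh_sub, Complex.cosh_mul_I, Complex.sinh_mul_I, Complex.cos_pi_div_two,
        Complex.sin_pi_div_two]
      ring
    have hE : Complex.exp (-(Real.pi * c) * (x : ℂ) ^ 2
        + (-2 * Real.pi * (Complex.I * (-(1 / 2)) * c + α)) * (x : ℂ) + 0) =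
        κ * (N ((x : ℂ) - Complex.I / 2) + 1) := by
      simp only [hN, hκ, sub_add_cancel]
      rw [← Complex.exp_add]
      congr 1
      linear_combination (Real.pi * c / 4) * Complex.I_sq
    rw [hgne _ hne, hSw, hE]
    push_cast
    have := hcoshne x
    have := Complex.I_ne_zero
    field_simp
  have hint : Integrable (fun x : ℝ => Complex.exp (-(Real.pi * c) * (x : ℂ) ^ 2
        + (-2 * Real.pi * (Complex.I * (-(1 / 2)) * c + α)) * (x : ℂ) + 0) /
          Complex.cosh (Real.pi * (x : ℂ))) := by
    have h1 := integrable_cexp_quadratic (b := Real.pi * c)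
      (by simpa using mul_pos hpi hc) (-2 * Real.pi * (Complex.I * (-(1 / 2)) * c + α)) 0
    refine h1.mono (Continuous.aestronglyMeasurable ?_) (ae_of_all _ fun x => ?_)
    · exact Continuous.div (by fun_prop) (by fun_prop) hcoshne
    · rw [norm_div]
      apply div_le_self (norm_nonneg _)
      have := mib_cosh (Real.pi * x) 0
      simpa using this
  have hgi : Integrable (fun x : ℝ => g ((x : ℂ) - Complex.I / 2)) := by
    have := ((hint.const_mul κ⁻¹).sub siC).const_mul Complex.I
    refine this.congr (ae_of_all _ fun x => ?_)
    simp only [Pi.sub_apply]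
    rw [hform, inv_mul_cancel_left₀ hκ0]
    linear_combination (-g ((x : ℂ) - Complex.I / 2)) * Complex.I_sq
  simp only [hform]
  rw [integral_const_mul, integral_add (hgi.const_mul _) siC, integral_const_mul, seC, norm_mul]
  have hκn : ‖κ‖ = Real.exp (-(Real.pi / 4 * c.re)) := by
    rw [hκ, Complex.norm_exp]
    congr 1
    simp
  rw [hκn, mul_comm]
  gcongr
  refine (norm_add_le _ _).trans ?_
  rw [norm_mul, norm_neg, Complex.norm_I, one_mul, norm_one]
  linarith

/-- Bounds for the Mordell-type integral
`H(iβ/(kz)+α; i/(kz)) = ∫_ℝ exp(−πx²/(kz) − 2πx(iβ/(kz)+α))/cosh(πx) dx`. -/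
theorem mordell_integral_bound (k : ℕ) (hk : 0 < k) (α β : ℝ)
    (hα : |α| < 1 / 2) (hβ₁ : -(1 / 2) ≤ β) (hβ₂ : β < 1 / 2)
    (z : ℂ) (hz : 0 < z.re) :
    (β ≠ -(1 / 2) →
      ‖∫ x : ℝ,
          Complex.exp (-(Real.pi : ℂ) * (x : ℂ) ^ 2 / ((k : ℂ) * z)
              - 2 * (Real.pi : ℂ) * (x : ℂ) *
                (Complex.I * (β : ℂ) / ((k : ℂ) * z) + (α : ℂ))) /
            Complex.cosh ((Real.pi : ℂ) * (x : ℂ))‖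
        ≤ |1 / Real.cos (Real.pi * β)| * Real.sqrt k * (z⁻¹.re) ^ (-(1 / 2) : ℝ) *
            Real.exp (-(Real.pi * β ^ 2 / k) * z⁻¹.re
              + Real.pi * k * α ^ 2 * (z⁻¹.re)⁻¹)) ∧
    (β = -(1 / 2) →
      ‖∫ x : ℝ,
          Complex.exp (-(Real.pi : ℂ) * (x : ℂ) ^ 2 / ((k : ℂ) * z)
              - 2 * (Real.pi : ℂ) * (x : ℂ) *
                (Complex.I * (β : ℂ) / ((k : ℂ) * z) + (α : ℂ))) /
            Complex.cosh ((Real.pi : ℂ) * (x : ℂ))‖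
        ≤ (1 + Real.sqrt k * (z⁻¹.re) ^ (-(1 / 2) : ℝ)) *
            Real.exp (-(Real.pi / (4 * k)) * z⁻¹.re)) := by
  have hk' : (0 : ℝ) < k := by exact_mod_cast hk
  have hkC : (k : ℂ) ≠ 0 := by exact_mod_cast hk.ne'
  have hz0 : z ≠ 0 := by rintro rfl; simp at hz
  have hR : 0 < z⁻¹.re := by
    rw [Complex.inv_re]
    exact div_pos hz (Complex.normSq_pos.mpr hz0)
  have hcre : (((1 / k : ℝ) : ℂ) * z⁻¹).re = z⁻¹.re / k := by
    rw [Complex.re_ofReal_mul]; ring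
  have hc : 0 < (((1 / k : ℝ) : ℂ) * z⁻¹).re := by rw [hcre]; positivity
  have hform : ∀ x : ℝ, Complex.exp (-(Real.pi : ℂ) * (x : ℂ) ^ 2 / ((k : ℂ) * z)
              - 2 * (Real.pi : ℂ) * (x : ℂ) *
                (Complex.I * (β : ℂ) / ((k : ℂ) * z) + (α : ℂ))) =
      Complex.exp (-(Real.pi * (((1 / k : ℝ) : ℂ) * z⁻¹)) * (x : ℂ) ^ 2
        + (-2 * Real.pi * (Complex.I * β * (((1 / k : ℝ) : ℂ) * z⁻¹) + α)) * (x : ℂ) + 0) := by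
    intro x
    congr 1
    push_cast
    field_simp
    ring
  simp only [hform]
  have hsq : (Real.sqrt (z⁻¹.re / k))⁻¹ = Real.sqrt k * z⁻¹.re ^ (-(1 / 2) : ℝ) := by
    rw [Real.rpow_neg hR.le, ← Real.sqrt_eq_rpow, Real.sqrt_div hR.le, inv_div, div_eq_mul_inv]
  refine ⟨fun hne => ?_, fun heq => ?_⟩
  · have hb : -(1 / 2) < β := lt_of_le_of_ne hβ₁ (Ne.symm hne)
    have hpi := Real.pi_pos
    have hcos : 0 < Real.cos (Real.pi * β) := by
      apply Real.cos_pos_of_mem_Ioo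
      constructor <;> nlinarith
    refine (mib_case1 _ hc α β hb hβ₂).trans_eq ?_
    rw [hcre, hsq, abs_of_pos (by positivity), Real.exp_add,
      show Real.pi * α ^ 2 / (z⁻¹.re / k) = Real.pi * k * α ^ 2 * (z⁻¹.re)⁻¹ by field_simp,
      show -(Real.pi * β ^ 2 * (z⁻¹.re / k)) = -(Real.pi * β ^ 2 / k) * z⁻¹.re by ring]
    ring
  · have h := mib_case2 _ hc α hα
    rw [hcre, hsq] at h
    have hβC : (β : ℂ) = -(1 / 2) := by rw [heq]; push_cast; ring
    rw [hβC]
    refine h.trans_eq ?_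
    congr 2
    ring
end

section
/- Let n ≥ 2 be an integer and set N = ⌊√n⌋. Let k, k0, k1 be positive integers with k ≤ N, k0 ≤ N, k1 ≤ N, k0 + k > N, and k1 + k > N (as holds when h0/k0, h/k, h1/k1 are three consecutive Farey fractions of order N), and set ϑ' := 1/(k(k0+k)) and ϑ'' := 1/(k(k1+k)). Let r > 0 be real, and for Φ ∈ ℝ write z = z(Φ) := k/n − ikΦ (so Re(z) = k/n > 0) and let z^{−1/2} denote the principal branch. Then ∫_{−ϑ'}^{ϑ''} z^{−1/2} · exp( 2πnz/k − πz/(4k) + πr/(kz) ) dΦ = (4 / (k^{1/2}·(8n−1)^{1/2})) · cosh( (π/k)·√(r(8n−1)) ) + E, where |E| ≤ √2·(1 + 6e^{2π(1+2r)})/(3n^{3/4}) + 2(2−√2)/(k·n^{1/4}). -/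
open MeasureTheory intervalIntegral
open Filter Topology in
lemma G_lim (G : ℂ → ℂ) (hG0 : G 0 = 0) (hG : ∀ z, HasDerivAt G (Complex.exp (z ^ 2)) z)
    (v : ℝ → ℂ) (hre : Tendsto (fun R => (v R).re) atTop (𝓝 0))
    (him : Tendsto (fun R => (v R).im) atTop atTop) :
    Tendsto (fun R => G (v R)) atTop (𝓝 (Complex.I * (Real.sqrt Real.pi / 2 : ℝ))) := by
  -- along the imaginary axis
  have h1 : ∀ T : ℝ, G (T * Complex.I) = Complex.I * ((∫ t in (0:ℝ)..T, Real.exp (-1 * t ^ 2) : ℝ) : ℂ) := by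
    intro T
    have hd : ∀ t : ℝ, HasDerivAt (fun t : ℝ => G (t * Complex.I))
        (Complex.I * ((Real.exp (-1 * t ^ 2) : ℝ) : ℂ)) t := by
      intro t
      have h2 : HasDerivAt (fun t : ℝ => (t : ℂ) * Complex.I) (1 * Complex.I) t :=
        (Complex.ofRealCLM.hasDerivAt (x := t)).mul_const _
      have h3 := (hG (t * Complex.I)).comp t h2
      refine h3.congr_deriv ?_
      rw [mul_pow, Complex.I_sq]
      push_cast
      rw [mul_comm, one_mul]
      congr 2
      ring
    have h4 := integral_eq_sub_of_hasDerivAt (a := 0) (b := T) (fun t _ => hd t)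
      (Continuous.intervalIntegrable (by fun_prop) _ _)
    rw [intervalIntegral.integral_const_mul, intervalIntegral.integral_ofReal] at h4
    rw [h4]; simp [hG0]
  have h2 : Tendsto (fun R => G ((v R).im * Complex.I)) atTop
      (𝓝 (Complex.I * (Real.sqrt Real.pi / 2 : ℝ))) := by
    simp_rw [h1]
    apply Tendsto.const_mul
    have h3 := intervalIntegral_tendsto_integral_Ioi (μ := volume) 0
      ((integrable_exp_neg_mul_sq (b := 1) one_pos).integrableOn (s := Set.Ioi 0)) him
    rw [integral_gaussian_Ioi, div_one] at h3
    exact (Complex.continuous_ofReal.tendsto _).comp h3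
  have h3 : Tendsto (fun R => G (v R) - G ((v R).im * Complex.I)) atTop (𝓝 0) := by
    have hb : Tendsto (fun R => Real.exp 1 * ‖((v R).re : ℂ)‖) atTop (𝓝 0) := by
      have := (hre.norm).const_mul (Real.exp 1)
      simpa using this
    refine squeeze_zero_norm' ?_ hb
    have hev : ∀ᶠ R in atTop, |(v R).re| < 1 := by
      have := hre.abs
      simp only [abs_zero] at this
      exact this.eventually_lt_const one_pos
    filter_upwards [hev] with R hR
    have hconv : Convex ℝ {z : ℂ | z.re ∈ Set.Icc (-1:ℝ) 1} :=
      (convex_Icc (-1:ℝ) 1).linear_preimage Complex.reLm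
    have := hconv.norm_image_sub_le_of_norm_hasDerivWithin_le (f := G) (C := Real.exp 1)
      (f' := fun z => Complex.exp (z ^ 2)) (x := (v R).im * Complex.I) (y := v R)
      (fun z _ => (hG z).hasDerivWithinAt) (by
        intro z hz
        rw [Complex.norm_exp]
        apply Real.exp_le_exp.mpr
        simp only [Set.mem_ofPred_eq, Set.mem_Icc] at hz
        rw [pow_two, Complex.mul_re]
        nlinarith [hz.1, hz.2, mul_self_nonneg z.im]) (by simp) (by
        simp only [Set.mem_ofPred_eq, Set.mem_Icc]
        exact abs_le.mp hR.le)
    have hvv : v R - (v R).im * Complex.I = ((v R).re : ℂ) := by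
      apply Complex.ext <;> simp
    rwa [hvv] at this
  have := h3.add h2
  simpa using this

lemma G_odd (G : ℂ → ℂ) (hG0 : G 0 = 0) (hG : ∀ z, HasDerivAt G (Complex.exp (z ^ 2)) z) (z : ℂ) :
    G (-z) = - G z := by
  have hd : ∀ z, HasDerivAt (fun z => G (-z) + G z) 0 z := by
    intro z
    have h1 := (hG (-z)).comp z (hasDerivAt_neg z)
    refine (h1.add (hG z)).congr_deriv ?_
    rw [neg_sq]; ring
  have := is_const_of_deriv_eq_zero (fun z => (hd z).differentiableAt) (fun z => (hd z).deriv) z 0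
  simp only [neg_zero, hG0, add_zero] at this
  exact eq_neg_of_add_eq_zero_left this

lemma sqrt_sq' (z : ℂ) : (z ^ (1/2 : ℂ)) ^ 2 = z := by
  simp [one_div]

lemma sqrt_re_nonneg (z : ℂ) : 0 ≤ (z ^ (1/2 : ℂ)).re := by
  have := Complex.abs_arg_le_pi_div_two_iff (z := z ^ (1/2 : ℂ))
  rw [← this]
  by_cases hz : z = 0
  · subst hz
    rw [Complex.zero_cpow (by norm_num)]
    simp only [Complex.arg_zero, abs_zero]
    positivity
  · rw [Complex.cpow_def_of_ne_zero hz, Complex.arg_exp]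
    have him : (Complex.log z * (1/2)).im = z.arg / 2 := by
      rw [show (1/2 : ℂ) = ((1/2:ℝ):ℂ) by push_cast; rfl, Complex.im_mul_ofReal, Complex.log_im]; ring
    have h1 := Complex.neg_pi_lt_arg z
    have h2 := Complex.arg_le_pi z
    rw [him, (toIocMod_eq_self _).mpr]
    · rw [abs_le]; constructor <;> linarith
    · constructor <;> linarith [Real.pi_pos]

/-- square root along the line `-R+iy` -/
lemma sqrt_line (y : ℝ) (hy : 0 < y) (R : ℝ) (hR : 0 < R) (w : ℂ)
    (hw : w ^ 2 = (-R + y * Complex.I : ℂ)) (hre : 0 ≤ w.re) :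
    Real.sqrt R ≤ w.im ∧ w.re ≤ y / (2 * Real.sqrt R) := by
  have h1 := congrArg Complex.re hw
  have h2 := congrArg Complex.im hw
  simp [pow_two] at h1 h2
  have hpos : 0 < w.im := by
    by_contra h
    push Not at h
    nlinarith [mul_nonneg hre (neg_nonneg.mpr h)]
  have h3 : Real.sqrt R ≤ w.im := by
    rw [← Real.sqrt_sq hpos.le]
    apply Real.sqrt_le_sqrt
    nlinarith [mul_self_nonneg w.re]
  refine ⟨h3, ?_⟩
  have h4 := Real.sqrt_pos.mpr hR
  rw [le_div_iff₀ (by positivity)]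
  nlinarith

open Filter Topology in
lemma v_lim (a b y : ℝ) (ha : 0 < a) (hy : 0 < y) (v : ℝ → ℂ)
    (hv : v = fun R : ℝ => a * (-R + y * Complex.I : ℂ) ^ (1/2 : ℂ)
      + b * ((-R + y * Complex.I : ℂ) ^ (1/2 : ℂ))⁻¹) :
    Tendsto (fun R => (v R).re) atTop (𝓝 0) ∧ Tendsto (fun R => (v R).im) atTop atTop := by
  set w : ℝ → ℂ := fun R => (-R + y * Complex.I : ℂ) ^ (1/2 : ℂ) with hw
  have hs : ∀ᶠ R in atTop, Real.sqrt R ≤ (w R).im ∧ (w R).re ≤ y / (2 * Real.sqrt R) := by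
    filter_upwards [eventually_gt_atTop 0] with R hR
    exact sqrt_line y hy R hR (w R) (sqrt_sq' _) (sqrt_re_nonneg _)
  have him : Tendsto (fun R => (w R).im) atTop atTop :=
    tendsto_atTop_mono' _ (hs.mono fun _ h => h.1) Real.tendsto_sqrt_atTop
  have hre : Tendsto (fun R => (w R).re) atTop (𝓝 0) := by
    refine squeeze_zero' (Eventually.of_forall fun R => sqrt_re_nonneg _) (hs.mono fun _ h => h.2) ?_
    exact Tendsto.const_div_atTop (Real.tendsto_sqrt_atTop.const_mul_atTop two_pos) _
  have hinv : Tendsto (fun R => (w R)⁻¹) atTop (𝓝 0) := by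
    apply tendsto_inv₀_cobounded.comp
    rw [← tendsto_norm_atTop_iff_cobounded]
    exact tendsto_atTop_mono (fun R => (le_abs_self _).trans (Complex.abs_im_le_norm _)) him
  have hire := (Complex.continuous_re.tendsto _).comp hinv
  have hiim := (Complex.continuous_im.tendsto _).comp hinv
  subst hv
  constructor
  · have := (hre.const_mul a).add (hire.const_mul b)
    simpa [w, Function.comp_def] using this
  · have := (him.const_mul_atTop ha).atTop_add (hiim.const_mul b)
    simpa [w, Function.comp_def] using this

open Filter Topology in
lemma G_lim_low (G : ℂ → ℂ) (hG0 : G 0 = 0) (hG : ∀ z, HasDerivAt G (Complex.exp (z ^ 2)) z)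
    (a b y : ℝ) (ha : 0 < a) (hy : y < 0) :
    Tendsto (fun R : ℝ => G (a * (-R + y * Complex.I : ℂ) ^ (1/2 : ℂ)
      + b * ((-R + y * Complex.I : ℂ) ^ (1/2 : ℂ))⁻¹)) atTop
      (𝓝 (-(Complex.I * (Real.sqrt Real.pi / 2 : ℝ)))) := by
  obtain ⟨p1, p2⟩ := v_lim a b (-y) ha (by linarith) _ rfl
  have key : ∀ R : ℝ, (-R + y * Complex.I : ℂ) ^ (1/2 : ℂ)
      = (starRingEnd ℂ) ((-R + (-y : ℝ) * Complex.I : ℂ) ^ (1/2 : ℂ)) := by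
    intro R
    have harg : (-R + (-y : ℝ) * Complex.I : ℂ).arg ≠ Real.pi := by
      rw [Ne, Complex.arg_eq_pi_iff]
      rintro ⟨_, h⟩
      simp at h
      linarith
    have := Complex.conj_cpow (-R + (-y : ℝ) * Complex.I : ℂ) (1/2) harg
    have h2 : (starRingEnd ℂ) (1/2 : ℂ) = 1/2 := by
      rw [show (1/2:ℂ) = ((1/2:ℝ):ℂ) by push_cast; rfl]; exact Complex.conj_ofReal _
    rw [h2] at this
    rw [← this]
    congr 1
    simp
  have h := (G_lim G hG0 hG (fun R : ℝ => -(a * (-R + y * Complex.I : ℂ) ^ (1/2 : ℂ)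
      + b * ((-R + y * Complex.I : ℂ) ^ (1/2 : ℂ))⁻¹)) ?_ ?_).neg
  · refine h.congr fun R => ?_
    rw [G_odd G hG0 hG, neg_neg]
  · have := p1.neg
    rw [neg_zero] at this
    refine this.congr fun R => ?_
    rw [key, ← Complex.conj_inv]
    simp
  · refine p2.congr fun R => ?_
    rw [key, ← map_inv₀]
    simp
    try ring

open Filter Topology in
/-- Primitive of `z^{-1/2} exp(a²z+b²/z)` with its limits. -/
lemma exists_primitive (a b : ℝ) (ha : 0 < a) :
    ∃ K : ℂ → ℂ, (∀ z ∈ Complex.slitPlane, HasDerivAt K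
      (z ^ (-(1/2) : ℂ) * Complex.exp ((a:ℂ) ^ 2 * z + (b:ℂ) ^ 2 / z)) z) ∧
      (∀ y : ℝ, 0 < y → Tendsto (fun R : ℝ => K (-R + y * Complex.I)) atTop
        (𝓝 (Complex.I * (Real.sqrt Real.pi / a * Real.cosh (2 * a * b) : ℝ)))) ∧
      (∀ y : ℝ, y < 0 → Tendsto (fun R : ℝ => K (-R + y * Complex.I)) atTop
        (𝓝 (-(Complex.I * (Real.sqrt Real.pi / a * Real.cosh (2 * a * b) : ℝ))))) := by
  obtain ⟨G, hG0, hG⟩ := (Differentiable.isExactOn_univ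
    (f := fun z : ℂ => Complex.exp (z ^ 2)) (by fun_prop)).with_val_at 0 0
  replace hG : ∀ z, HasDerivAt G (Complex.exp (z ^ 2)) z := fun z => hG z (Set.mem_univ _)
  have hac : (a : ℂ) ≠ 0 := by exact_mod_cast ha.ne'
  let K : ℂ → ℂ := fun z => (1 / a : ℂ) *
    (Complex.exp (-(2 * a * b)) * G (a * z ^ (1/2:ℂ) + b * (z ^ (1/2:ℂ))⁻¹)
    + Complex.exp (2 * a * b) * G (a * z ^ (1/2:ℂ) + (-b : ℝ) * (z ^ (1/2:ℂ))⁻¹))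
  have hup : ∀ y : ℝ, 0 < y → Tendsto (fun R : ℝ => K (-R + y * Complex.I)) atTop
        (𝓝 (Complex.I * (Real.sqrt Real.pi / a * Real.cosh (2 * a * b) : ℝ))) := by
    intro y hy
    obtain ⟨p1, p2⟩ := v_lim a b y ha hy _ rfl
    obtain ⟨q1, q2⟩ := v_lim a (-b) y ha hy _ rfl
    have := (((G_lim G hG0 hG _ p1 p2).const_mul (Complex.exp (-(2 * a * b)))).add
      ((G_lim G hG0 hG _ q1 q2).const_mul (Complex.exp (2 * a * b)))).const_mul (1 / a : ℂ)
    convert this using 2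
    rw [Real.cosh_eq]
    push_cast
    field_simp
    ring
  refine ⟨K, ?_, hup, ?_⟩
  · intro z hz
    have hz0 : z ≠ 0 := Complex.slitPlane_ne_zero hz
    have hwd : HasDerivAt (fun z : ℂ => z ^ (1/2:ℂ)) ((1/2) * (z ^ (1/2:ℂ))⁻¹) z := by
      have := (hasDerivAt_id z).cpow_const (c := 1/2) hz
      refine this.congr_deriv ?_
      rw [← Complex.cpow_neg]
      norm_num
    set w := z ^ (1/2:ℂ) with hw
    have hw2 : w ^ 2 = z := sqrt_sq' z
    have hw0 : w ≠ 0 := by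
      intro h; rw [h] at hw2; exact hz0 (by rw [← hw2]; simp)
    have hwi := hwd.inv hw0
    have e1 := (hG (a * w + b * w⁻¹)).comp z ((hwd.const_mul (a:ℂ)).add (hwi.const_mul (b:ℂ)))
    have e2 := (hG (a * w + (-b : ℝ) * w⁻¹)).comp z
      ((hwd.const_mul (a:ℂ)).add (hwi.const_mul ((-b : ℝ):ℂ)))
    have e3 := ((e1.const_mul (Complex.exp (-(2 * a * b)))).add
      (e2.const_mul (Complex.exp (2 * a * b)))).const_mul (1 / a : ℂ)
    refine e3.congr_deriv ?_
    have x1 : Complex.exp (-(2 * a * b)) * Complex.exp ((a * w + b * w⁻¹) ^ 2)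
        = Complex.exp ((a:ℂ) ^ 2 * z + (b:ℂ) ^ 2 / z) := by
      rw [← Complex.exp_add, ← hw2]; congr 1; field_simp; ring
    have x2 : Complex.exp (2 * a * b) * Complex.exp ((a * w + (-b : ℝ) * w⁻¹) ^ 2)
        = Complex.exp ((a:ℂ) ^ 2 * z + (b:ℂ) ^ 2 / z) := by
      rw [← Complex.exp_add, ← hw2]; congr 1; push_cast; field_simp; ring
    rw [← mul_assoc (Complex.exp (-(2 * a * b))), ← mul_assoc (Complex.exp (2 * a * b)), x1, x2,
      Complex.cpow_neg, ← hw]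
    push_cast
    field_simp
    ring
  · intro y hy
    have := (((G_lim_low G hG0 hG a b y ha hy).const_mul (Complex.exp (-(2 * a * b)))).add
      ((G_lim_low G hG0 hG a (-b) y ha hy).const_mul (Complex.exp (2 * a * b)))).const_mul (1 / a : ℂ)
    convert this using 2
    rw [Real.cosh_eq]
    push_cast
    field_simp
    ring

open Filter Topology in
lemma tail_bound (K f : ℂ → ℂ) (hK : ∀ z ∈ Complex.slitPlane, HasDerivAt K (f z) z)
    (y c A C : ℝ) (hy : y ≠ 0) (hA : 0 < A) (hC : 0 ≤ C) (L : ℂ)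
    (hf : ∀ u : ℝ, u ≤ c → ‖f (u + y * Complex.I)‖ ≤ C * Real.exp (A * u))
    (hL : Tendsto (fun R : ℝ => K (-R + y * Complex.I)) atTop (𝓝 L)) :
    ‖K (c + y * Complex.I) - L‖ ≤ C * Real.exp (A * c) / A := by
  have hlim := (hL.const_sub (K (c + y * Complex.I))).norm
  refine le_of_tendsto hlim ?_
  filter_upwards [eventually_gt_atTop (-c)] with R hR
  have hd : ∀ u : ℝ, HasDerivAt (fun u : ℝ => K (u + y * Complex.I) - K (-R + y * Complex.I))
      (f (u + y * Complex.I)) u := by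
    intro u
    have h2 : HasDerivAt (fun u : ℝ => (u : ℂ) + y * Complex.I) 1 u :=
      (Complex.ofRealCLM.hasDerivAt (x := u)).add_const _
    have h3 := (hK (u + y * Complex.I) (by
      rw [Complex.mem_slitPlane_iff]; right; simpa using hy)).comp u h2
    rw [mul_one] at h3
    exact h3.sub_const _
  have hB : ∀ u : ℝ, HasDerivAt (fun u : ℝ => C / A * (Real.exp (A * u) - Real.exp (A * (-R))))
      (C * Real.exp (A * u)) u := by
    intro u
    have h1 : HasDerivAt (fun u : ℝ => A * u) A u := by
      simpa using (hasDerivAt_id u).const_mul A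
    refine ((h1.exp.sub_const _).const_mul _).congr_deriv ?_
    field_simp
  have := image_norm_le_of_norm_deriv_right_le_deriv_boundary (a := -R) (b := c)
    (fun u _ => (hd u).continuousAt.continuousWithinAt)
    (fun u _ => (hd u).hasDerivWithinAt) (by simp) hB
    (fun u hu => hf u hu.2.le) (x := c) ⟨by linarith, le_rfl⟩
  refine this.trans ?_
  rw [mul_sub, div_mul_eq_mul_div]
  have : 0 ≤ C / A * Real.exp (A * (-R)) := by positivity
  linarith

lemma integrand_bound (A B D y c S : ℝ) (hB : 0 ≤ B) (hS : 0 < S) (hyS : 1 / S ≤ |y|)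
    (hD0 : 0 ≤ D) (hD : B * c * S ^ 2 ≤ D) (u : ℝ) (hu : u ≤ c) :
    ‖((u + y * Complex.I : ℂ)) ^ (-(1/2) : ℂ) *
      Complex.exp ((A:ℂ) * (u + y * Complex.I) + (B:ℂ) / (u + y * Complex.I))‖
      ≤ Real.sqrt S * Real.exp D * Real.exp (A * u) := by
  have hy0 : 0 < |y| := lt_of_lt_of_le (by positivity) hyS
  have hyn : |y| ≤ ‖(u + y * Complex.I : ℂ)‖ := by
    have := Complex.abs_im_le_norm (u + y * Complex.I : ℂ)
    simpa using this
  have hz0 : 0 < ‖(u + y * Complex.I : ℂ)‖ := lt_of_lt_of_le hy0 hyn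
  have h1 : ‖((u + y * Complex.I : ℂ)) ^ (-(1/2) : ℂ)‖ ≤ Real.sqrt S := by
    have : (-(1/2) : ℂ) = ((-(1/2) : ℝ) : ℂ) := by push_cast; rfl
    rw [this, Complex.norm_cpow_real, Real.rpow_neg hz0.le, ← Real.sqrt_eq_rpow, ← Real.sqrt_inv]
    apply Real.sqrt_le_sqrt
    rw [inv_le_comm₀ hz0 hS, ← one_div]
    exact hyS.trans hyn
  rw [norm_mul, mul_assoc]
  refine mul_le_mul h1 ?_ (norm_nonneg _) (Real.sqrt_nonneg _)
  rw [Complex.norm_exp, ← Real.exp_add]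
  apply Real.exp_le_exp.mpr
  have hre : ((A:ℂ) * (u + y * Complex.I) + (B:ℂ) / (u + y * Complex.I)).re
      = A * u + B * (u / (u ^ 2 + y ^ 2)) := by
    rw [div_eq_mul_inv, Complex.add_re, Complex.re_ofReal_mul, Complex.re_ofReal_mul, Complex.inv_re]
    simp [Complex.normSq_apply, pow_two]
  rw [hre]
  have hyy : 0 < y ^ 2 := by rw [← sq_abs]; positivity
  have : B * (u / (u ^ 2 + y ^ 2)) ≤ D := by
    rcases le_or_gt u 0 with h | h
    · refine le_trans ?_ hD0
      exact mul_nonpos_of_nonneg_of_nonpos hB (div_nonpos_of_nonpos_of_nonneg h (by positivity))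
    · refine le_trans ?_ hD
      rw [mul_assoc]
      refine mul_le_mul_of_nonneg_left ?_ hB
      have hS2 : 1 ≤ S ^ 2 * y ^ 2 := by
        rw [← sq_abs y, ← mul_pow]
        rw [div_le_iff₀ hS] at hyS
        nlinarith
      rw [div_le_iff₀ (by positivity)]
      have h3 : c ≤ c * (S ^ 2 * y ^ 2) := le_mul_of_one_le_right (by linarith) hS2
      have h4 : 0 ≤ c * (S ^ 2 * u ^ 2) := by
        have : 0 < c := by linarith
        positivity
      nlinarith
  linarith

/-- Evaluation, with explicit error bound, of the integral
`∫_{−ϑ'}^{ϑ''} z^{−1/2} exp(2πnz/k − πz/(4k) + πr/(kz)) dΦ`, where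
`z = k/n − ikΦ`, `ϑ' = 1/(k(k₀+k))`, `ϑ'' = 1/(k(k₁+k))`, and
`h₀/k₀, h/k, h₁/k₁` are consecutive Farey fractions of order `N = ⌊√n⌋`. -/
theorem farey_arc_bessel_integral (n : ℕ) (hn : 2 ≤ n) (N : ℕ) (hN : N = Nat.sqrt n)
    (k k₀ k₁ : ℕ) (hk : 0 < k) (hk₀ : 0 < k₀) (hk₁ : 0 < k₁)
    (hkN : k ≤ N) (hk₀N : k₀ ≤ N) (hk₁N : k₁ ≤ N)
    (hsum₀ : N < k₀ + k) (hsum₁ : N < k₁ + k)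
    (r : ℝ) (hr : 0 < r) :
    ‖(∫ Φ : ℝ in (-(1 / ((k : ℝ) * ((k₀ : ℝ) + (k : ℝ)))))..(1 / ((k : ℝ) * ((k₁ : ℝ) + (k : ℝ)))),
        ((k : ℂ) / (n : ℂ) - Complex.I * (k : ℂ) * (Φ : ℂ)) ^ (-(1 / 2) : ℂ) *
          Complex.exp
            (2 * (Real.pi : ℂ) * (n : ℂ) * ((k : ℂ) / (n : ℂ) - Complex.I * (k : ℂ) * (Φ : ℂ)) / (k : ℂ)
              - (Real.pi : ℂ) * ((k : ℂ) / (n : ℂ) - Complex.I * (k : ℂ) * (Φ : ℂ)) / (4 * (k : ℂ))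
              + (Real.pi : ℂ) * (r : ℂ) /
                  ((k : ℂ) * ((k : ℂ) / (n : ℂ) - Complex.I * (k : ℂ) * (Φ : ℂ)))))
      - ((4 / (Real.sqrt k * Real.sqrt (8 * (n : ℝ) - 1)) *
            Real.cosh (Real.pi / (k : ℝ) * Real.sqrt (r * (8 * (n : ℝ) - 1))) : ℝ) : ℂ)‖
    ≤ Real.sqrt 2 * (1 + 6 * Real.exp (2 * Real.pi * (1 + 2 * r))) / (3 * (n : ℝ) ^ ((3 : ℝ) / 4))
      + 2 * (2 - Real.sqrt 2) / ((k : ℝ) * (n : ℝ) ^ ((1 : ℝ) / 4)) := by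
  have hkR : (0:ℝ) < k := by exact_mod_cast hk
  have hnR : (2:ℝ) ≤ n := by exact_mod_cast hn
  have hNR : (1:ℝ) ≤ N := by exact_mod_cast (le_trans hk hkN)
  have hNn : (N:ℝ) ^ 2 ≤ n := by
    have : N ^ 2 ≤ n := by rw [hN]; exact Nat.sqrt_le' n
    exact_mod_cast this
  have hkNR : (k:ℝ) ≤ N := by exact_mod_cast hkN
  have hk0NR : (k₀:ℝ) ≤ N := by exact_mod_cast hk₀N
  have hk1NR : (k₁:ℝ) ≤ N := by exact_mod_cast hk₁N
  have hk0R : (0:ℝ) < k₀ := by exact_mod_cast hk₀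
  have hk1R : (0:ℝ) < k₁ := by exact_mod_cast hk₁
  have hn0 : (0:ℝ) < n := by linarith
  have h8 : (0:ℝ) < 8 * n - 1 := by linarith
  have hpi := Real.pi_pos
  obtain ⟨A, hA⟩ : ∃ A : ℝ, A = Real.pi * (8 * n - 1) / (4 * k) := ⟨_, rfl⟩
  obtain ⟨B, hB⟩ : ∃ B : ℝ, B = Real.pi * r / k := ⟨_, rfl⟩
  have hApos : 0 < A := by rw [hA]; positivity
  have hBpos : 0 < B := by rw [hB]; positivity
  obtain ⟨K, hK, hKup, hKlow⟩ := exists_primitive (Real.sqrt A) (Real.sqrt B) (Real.sqrt_pos.mpr hApos)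
  have hA2 : ((Real.sqrt A : ℝ) : ℂ) ^ 2 = (A : ℂ) := by
    rw [← Complex.ofReal_pow, Real.sq_sqrt hApos.le]
  have hB2 : ((Real.sqrt B : ℝ) : ℂ) ^ 2 = (B : ℂ) := by
    rw [← Complex.ofReal_pow, Real.sq_sqrt hBpos.le]
  rw [hA2, hB2] at hK
  set X : ℝ := Real.sqrt Real.pi / Real.sqrt A * Real.cosh (2 * Real.sqrt A * Real.sqrt B) with hX
  -- main term
  have hmain : 4 / (Real.sqrt k * Real.sqrt (8 * (n : ℝ) - 1)) *
            Real.cosh (Real.pi / (k : ℝ) * Real.sqrt (r * (8 * (n : ℝ) - 1))) = 2 * X / k := by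
    have e1 : 2 * Real.sqrt A * Real.sqrt B = Real.pi / (k : ℝ) * Real.sqrt (r * (8 * (n : ℝ) - 1)) := by
      rw [mul_assoc, ← Real.sqrt_mul hApos.le]
      have : A * B = (Real.pi / (2 * k)) ^ 2 * (r * (8 * (n : ℝ) - 1)) := by
        rw [hA, hB]; field_simp; ring
      rw [this, Real.sqrt_mul (by positivity), Real.sqrt_sq (by positivity)]
      field_simp
    have e2 : Real.sqrt A = Real.sqrt Real.pi * Real.sqrt (8 * n - 1) / (2 * Real.sqrt k) := by
      rw [hA, Real.sqrt_div (by positivity), Real.sqrt_mul hpi.le, Real.sqrt_mul (by norm_num)]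
      congr 2
      rw [show (4:ℝ) = 2 ^ 2 by norm_num, Real.sqrt_sq (by norm_num)]
    rw [hX, e1, e2]
    have s1 : 0 < Real.sqrt Real.pi := Real.sqrt_pos.mpr hpi
    have s2 : 0 < Real.sqrt (8 * (n:ℝ) - 1) := Real.sqrt_pos.mpr h8
    have s3 : 0 < Real.sqrt (k:ℝ) := Real.sqrt_pos.mpr hkR
    have s4 : (k:ℝ) = Real.sqrt k * Real.sqrt k := (Real.mul_self_sqrt hkR.le).symm
    generalize Real.cosh (Real.pi / (k : ℝ) * Real.sqrt (r * (8 * (n : ℝ) - 1))) = Q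
    rw [show 2 * (√Real.pi / (√Real.pi * √(8 * (n:ℝ) - 1) / (2 * √(k:ℝ))) * Q) / (k:ℝ)
      = 2 * (√Real.pi / (√Real.pi * √(8 * (n:ℝ) - 1) / (2 * √(k:ℝ))) * Q) / (√(k:ℝ) * √(k:ℝ)) by rw [← s4]]
    field_simp
    ring
  rw [hmain]
  have hkC : (k:ℂ) ≠ 0 := by exact_mod_cast hk.ne'
  have hnC : (n:ℂ) ≠ 0 := by
    have : n ≠ 0 := by omega
    exact_mod_cast this
  -- the integral
  have hslit : ∀ Φ : ℝ, ((k : ℂ) / (n : ℂ) - Complex.I * (k : ℂ) * (Φ : ℂ)) ∈ Complex.slitPlane := by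
    intro Φ
    rw [Complex.mem_slitPlane_iff]; left
    have : ((k : ℂ) / (n : ℂ) - Complex.I * (k : ℂ) * (Φ : ℂ))
        = ((k / n : ℝ) : ℂ) + ((-(k * Φ) : ℝ) : ℂ) * Complex.I := by push_cast; ring
    rw [this]
    simp only [Complex.add_re, Complex.ofReal_re, Complex.re_ofReal_mul, Complex.I_re, mul_zero, add_zero]
    positivity
  have hderiv : ∀ Φ : ℝ, HasDerivAt (fun Φ : ℝ => Complex.I / k *
      K ((k : ℂ) / (n : ℂ) - Complex.I * (k : ℂ) * (Φ : ℂ)))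
      (((k : ℂ) / (n : ℂ) - Complex.I * (k : ℂ) * (Φ : ℂ)) ^ (-(1 / 2) : ℂ) *
          Complex.exp
            (2 * (Real.pi : ℂ) * (n : ℂ) * ((k : ℂ) / (n : ℂ) - Complex.I * (k : ℂ) * (Φ : ℂ)) / (k : ℂ)
              - (Real.pi : ℂ) * ((k : ℂ) / (n : ℂ) - Complex.I * (k : ℂ) * (Φ : ℂ)) / (4 * (k : ℂ))
              + (Real.pi : ℂ) * (r : ℂ) /
                  ((k : ℂ) * ((k : ℂ) / (n : ℂ) - Complex.I * (k : ℂ) * (Φ : ℂ))))) Φ := by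
    intro Φ
    have h2 : HasDerivAt (fun Φ : ℝ => (k : ℂ) / (n : ℂ) - Complex.I * (k : ℂ) * (Φ : ℂ))
        (-(Complex.I * k * 1)) Φ :=
      ((Complex.ofRealCLM.hasDerivAt (x := Φ)).const_mul _).const_sub _
    have hz0 := Complex.slitPlane_ne_zero (hslit Φ)
    refine (((hK _ (hslit Φ)).comp Φ h2).const_mul (Complex.I / k)).congr_deriv ?_
    generalize (k : ℂ) / (n : ℂ) - Complex.I * (k : ℂ) * (Φ : ℂ) = z at hz0 ⊢
    have harg : (A:ℂ) * z + (B:ℂ) / z = 2 * (Real.pi : ℂ) * (n : ℂ) * z / (k : ℂ)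
              - (Real.pi : ℂ) * z / (4 * (k : ℂ)) + (Real.pi : ℂ) * (r : ℂ) / ((k : ℂ) * z) := by
      rw [hA, hB]; push_cast; field_simp; ring
    rw [harg]
    generalize z ^ (-(1 / 2) : ℂ) * Complex.exp _ = Q
    have : Complex.I / k * (Q * -(Complex.I * k * 1)) = -(Complex.I ^ 2) * Q := by
      field_simp
    rw [this, Complex.I_sq]; ring
  have hcont : Continuous (fun Φ : ℝ =>
      (((k : ℂ) / (n : ℂ) - Complex.I * (k : ℂ) * (Φ : ℂ)) ^ (-(1 / 2) : ℂ) *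
          Complex.exp
            (2 * (Real.pi : ℂ) * (n : ℂ) * ((k : ℂ) / (n : ℂ) - Complex.I * (k : ℂ) * (Φ : ℂ)) / (k : ℂ)
              - (Real.pi : ℂ) * ((k : ℂ) / (n : ℂ) - Complex.I * (k : ℂ) * (Φ : ℂ)) / (4 * (k : ℂ))
              + (Real.pi : ℂ) * (r : ℂ) /
                  ((k : ℂ) * ((k : ℂ) / (n : ℂ) - Complex.I * (k : ℂ) * (Φ : ℂ)))))) := by
    have hzc : Continuous (fun Φ : ℝ => (k : ℂ) / (n : ℂ) - Complex.I * (k : ℂ) * (Φ : ℂ)) := by fun_prop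
    refine (hzc.cpow continuous_const hslit).mul (Complex.continuous_exp.comp ?_)
    refine Continuous.add (by fun_prop) (continuous_const.div (by fun_prop) fun Φ => ?_)
    exact mul_ne_zero hkC (Complex.slitPlane_ne_zero (hslit Φ))
  rw [integral_eq_sub_of_hasDerivAt (fun Φ _ => hderiv Φ) (hcont.intervalIntegrable _ _)]
  -- endpoints
  have hz1 : ((k : ℂ) / (n : ℂ) - Complex.I * (k : ℂ) * ((1 / ((k : ℝ) * ((k₁ : ℝ) + (k : ℝ))) : ℝ) : ℂ))
      = ((k / n : ℝ) : ℂ) + ((-(1 / (k₁ + k)) : ℝ) : ℂ) * Complex.I := by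
    have : (k₁:ℂ) + k ≠ 0 := by
      have : k₁ + k ≠ 0 := by omega
      exact_mod_cast this
    push_cast; field_simp; ring
  have hz0 : ((k : ℂ) / (n : ℂ) - Complex.I * (k : ℂ) * ((-(1 / ((k : ℝ) * ((k₀ : ℝ) + (k : ℝ)))) : ℝ) : ℂ))
      = ((k / n : ℝ) : ℂ) + ((1 / (k₀ + k) : ℝ) : ℂ) * Complex.I := by
    have : (k₀:ℂ) + k ≠ 0 := by
      have : k₀ + k ≠ 0 := by omega
      exact_mod_cast this
    push_cast; field_simp; ring
  rw [hz1, hz0]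
  have hy1 : -(1 / ((k₁:ℝ) + k)) < 0 := by
    have : 0 < 1 / ((k₁:ℝ) + k) := by positivity
    linarith
  have hy0 : 0 < 1 / ((k₀:ℝ) + k) := by positivity
  have hD : B * (k / n) * (2 * N) ^ 2 ≤ 4 * Real.pi * r := by
    have : B * (k / n) * (2 * N) ^ 2 = 4 * Real.pi * r * (N ^ 2 / n) := by
      rw [hB]; field_simp; ring
    rw [this]
    exact mul_le_of_le_one_right (by positivity) ((div_le_one hn0).mpr hNn)
  have T0 := tail_bound K _ hK (1 / ((k₀:ℝ) + k)) (k / n) A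
    (Real.sqrt (2 * N) * Real.exp (4 * Real.pi * r)) hy0.ne' hApos (by positivity) _
    (fun u hu => integrand_bound A B (4 * Real.pi * r) _ (k / n) (2 * N) hBpos.le (by positivity)
      (by rw [abs_of_pos hy0]; exact one_div_le_one_div_of_le (by positivity) (by linarith))
      (by positivity) hD u hu) (hKup _ hy0)
  have T1 := tail_bound K _ hK (-(1 / ((k₁:ℝ) + k))) (k / n) A
    (Real.sqrt (2 * N) * Real.exp (4 * Real.pi * r)) hy1.ne hApos (by positivity) _
    (fun u hu => integrand_bound A B (4 * Real.pi * r) _ (k / n) (2 * N) hBpos.le (by positivity)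
      (by rw [abs_of_neg hy1, neg_neg]; exact one_div_le_one_div_of_le (by positivity) (by linarith))
      (by positivity) hD u hu) (hKlow _ hy1)
  generalize K (((k / n : ℝ) : ℂ) + ((-(1 / (k₁ + k)) : ℝ) : ℂ) * Complex.I) = K1 at T1 ⊢
  generalize K (((k / n : ℝ) : ℂ) + ((1 / (k₀ + k) : ℝ) : ℂ) * Complex.I) = K0 at T0 ⊢
  have heq : Complex.I / k * K1 - Complex.I / k * K0 - ((2 * X / k : ℝ) : ℂ)
      = Complex.I / k * ((K1 - -(Complex.I * (X:ℂ))) - (K0 - Complex.I * (X:ℂ))) := by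
    have : ((2 * X / k : ℝ) : ℂ) = - (Complex.I ^ 2) * (2 * X / k) := by
      rw [Complex.I_sq]; push_cast; ring
    rw [this]; ring
  rw [heq, norm_mul, norm_div, Complex.norm_I, Complex.norm_natCast]
  have hExp : Real.exp (A * (k / n)) ≤ Real.exp (2 * Real.pi) := by
    apply Real.exp_le_exp.mpr
    have : A * (k / n) = 2 * Real.pi * ((8 * n - 1) / (8 * n)) := by
      rw [hA]; field_simp; ring
    rw [this]
    exact mul_le_of_le_one_right (by positivity) ((div_le_one (by positivity)).mpr (by linarith))
  set E := Real.exp (2 * Real.pi * (1 + 2 * r)) with hE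
  have hEE : Real.exp (4 * Real.pi * r) * Real.exp (A * (k / n)) ≤ E := by
    have : E = Real.exp (4 * Real.pi * r) * Real.exp (2 * Real.pi) := by
      rw [hE, ← Real.exp_add]; congr 1; ring
    rw [this]
    exact mul_le_mul_of_nonneg_left hExp (Real.exp_pos _).le
  have hEpos : 0 < E := Real.exp_pos _
  set q := (n:ℝ) ^ ((1:ℝ)/4) with hq
  set p := (n:ℝ) ^ ((3:ℝ)/4) with hp
  have hqpos : 0 < q := Real.rpow_pos_of_pos hn0 _
  have hppos : 0 < p := Real.rpow_pos_of_pos hn0 _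
  have hpq : p * q = n := by
    rw [hp, hq, ← Real.rpow_add hn0]; norm_num
  have hNq : Real.sqrt N ≤ q := by
    rw [Real.sqrt_le_left hqpos.le]
    have h2 : (q ^ 2) ^ 2 = n := by
      rw [hq, ← Real.rpow_natCast, ← Real.rpow_natCast, ← Real.rpow_mul hn0.le, ← Real.rpow_mul hn0.le]
      norm_num
    have : (N:ℝ) ^ 2 ≤ (q ^ 2) ^ 2 := by rw [h2]; exact hNn
    exact (sq_le_sq₀ (by positivity) (by positivity)).mp this
  have hT : Real.sqrt (2 * N) * Real.exp (4 * Real.pi * r) * Real.exp (A * (k / n)) / A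
      ≤ Real.sqrt 2 * q * E / A := by
    rw [Real.sqrt_mul (by norm_num), mul_assoc _ (Real.exp _)]
    gcongr
  have hsum := (norm_sub_le (K1 - -(Complex.I * (X:ℂ))) (K0 - Complex.I * (X:ℂ))).trans
    (add_le_add (T1.trans hT) (T0.trans hT))
  have hs2 : Real.sqrt 2 ≤ 2 := by
    rw [Real.sqrt_le_left (by norm_num)]; norm_num
  have hextra : 0 ≤ 2 * (2 - Real.sqrt 2) / (k * q) := by
    apply div_nonneg <;> [linarith; positivity]
  have hfin : 1 / (k:ℝ) * (Real.sqrt 2 * q * E / A + Real.sqrt 2 * q * E / A)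
      ≤ Real.sqrt 2 * (1 + 6 * E) / (3 * p) := by
    have e1 : 1 / (k:ℝ) * (Real.sqrt 2 * q * E / A + Real.sqrt 2 * q * E / A)
        = Real.sqrt 2 * E * (8 * q / (Real.pi * (8 * n - 1))) := by
      rw [hA]; field_simp; ring
    have e2 : 8 * q / (Real.pi * (8 * n - 1)) ≤ 2 / p := by
      rw [div_le_div_iff₀ (by positivity) hppos]
      have := Real.pi_gt_three
      nlinarith
    have e3 : Real.sqrt 2 * (1 + 6 * E) / (3 * p) = Real.sqrt 2 * E * (2 / p) + Real.sqrt 2 / (3 * p) := by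
      field_simp; ring
    rw [e1, e3]
    have : 0 ≤ Real.sqrt 2 / (3 * p) := by positivity
    have := mul_le_mul_of_nonneg_left e2 (show 0 ≤ Real.sqrt 2 * E by positivity)
    linarith
  have := mul_le_mul_of_nonneg_left hsum (show 0 ≤ 1 / (k:ℝ) by positivity)
  linarith
end
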